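/- Fix n_{⋆,1}, n_{⋆,2}, n_{⋆,3} ∈ ℤ² and reals N₁, N₂, N₃ ≥ 1, and let N_max and N_min be the maximum and minimum of (N₁,N₂,N₃). Let h : (ℤ²)⁴ → {0,1} be the tensor h_{n n₁ n₂ n₃} := 1 if n = n₁ − n₂ + n₃, n₂ ≠ n₁, n₂ ≠ n₃, and N_j ≤ ⟨n_j − n_{⋆,j}⟩ ≤ 2N_j for j = 1,2,3, and h_{n n₁ n₂ n₃} := 0 otherwise. For m ∈ ℤ let h^m be the tensor h^m_{n n₁ n₂ n₃} := h_{n n₁ n₂ n₃} · 1[κ(n,n₁,n₂,n₃) = m], where κ(n,n₁,n₂,n₃) := ⟨n⟩² − ⟨n₁⟩² + ⟨n₂⟩² − ⟨n₃⟩². Then for every θ > 0 there exists C = C(θ) > 0, independent of n_{⋆,1}, n_{⋆,2}, n_{⋆,3}, of N₁, N₂, N₃, and of m, such that sup_{m∈ℤ} ‖h^m‖₂ ≤ C · N_max^{1/2+θ} · N_min^{1/2}, where ‖h‖₂ := max( ‖h‖_{n→n₁n₂n₃}, ‖h‖_{nn₁→n₂n₃} ). -/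

import Mathlib

/-!
With `n = n₁ - n₂ + n₃` the phase factorises: `κ = 2 (n₁ - n₂) · (n₃ - n₂) = 2 (n - n₁) · (n - n₃)`.
Every slice of `h^m` is therefore a `0/1` matrix whose rows and columns count lattice points subject
to one bilinear equation, and Schur's test (`schur_test`) bounds the squared operator norm by
(largest row count) × (largest column count).

*The norm `nn₁ → n₂n₃`.* Here `n₃ - n₂ = n - n₁` is fixed along rows and along columns, so both
counts are numbers of lattice points of a line in a ball: at most `9 N₁` for rows (`card_row_le`) and
`9 min(N₂, N₃)` for columns (`card_column_le`). The product is at most `81 N_max N_min`.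

*The norm `n → n₁n₂n₃`.* Rows have at most one entry. Columns count pairs `u = n - n₁ ≠ 0`,
`v = n - n₃ ≠ 0` with `u · v = m / 2`, where `u`, `v`, `u + v` range over balls of radii comparable to
`N₁`, `N₃`, `N₂` with arbitrary centres (in the code: sets of bounded diameter in the sup norm of
`ℤ × ℤ`); at most `C N_max^{1+2θ} N_min` are allowed (`card_fixed_output_le`).

* If `N₁` or, by symmetry, `N₃` is smallest, then for fixed `u` the point `v` lies on a line whose
  lattice points are spaced by the primitive vector `b(u)` in the direction of `u`, which leaves
  `1 + O(N_max / |b(u)|)` choices. The sum of `1 / |b(u)|` over a ball of radius `A` is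
  `O(A (1 + log A))` uniformly in its centre (`sum_inv_primPart_le`): at most `12 j` primitive vectors
  have sup norm `j`, and each carries `1 + O(A / j)` points of the ball.
* If `N₂` is smallest, then for fixed `w = u + v` the point `u - v` lies on a circle centred at the
  origin, and a set of diameter `B` contains `O(B^ε)` lattice points of such a circle, whatever the
  radius of the circle (`card_arc_le`). If the squared radius exceeds `2 B^6`, there are at most two
  of them (three would span a triangle of area less than `1/2`); otherwise the bound
  `r₂(R) = O(R^ε)` for the squared radius `R` applies, which follows from factorisation in the Gaussian integers
  (`card_norm_eq_le`).
-/

noncomputable section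

open scoped ENNReal

/-- `⟨n⟩² = 1 + |n|²` for `n ∈ ℤ²`. -/
def jbSq (n : ℤ × ℤ) : ℝ := 1 + (n.1 : ℝ) ^ 2 + (n.2 : ℝ) ^ 2

/-- `⟨n⟩` for `n ∈ ℤ²`. -/
def jbZ (n : ℤ × ℤ) : ℝ := Real.sqrt (jbSq n)

/-- `⟨n⟩² = 1 + |n|²` as an integer. -/
def jbSqInt (n : ℤ × ℤ) : ℤ := 1 + n.1 ^ 2 + n.2 ^ 2

/-- The Schrödinger phase `κ(n,n₁,n₂,n₃) = ⟨n⟩² − ⟨n₁⟩² + ⟨n₂⟩² − ⟨n₃⟩²`. -/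
def kappa (n n₁ n₂ n₃ : ℤ × ℤ) : ℤ :=
  jbSqInt n - jbSqInt n₁ + jbSqInt n₂ - jbSqInt n₃

/-- The base tensor `h_{n n₁ n₂ n₃}`: the indicator (with values in `{0,1}`) of
`n = n₁ − n₂ + n₃`, `n₂ ≠ n₁`, `n₂ ≠ n₃` and `N_j ≤ ⟨n_j − n_{⋆,j}⟩ ≤ 2N_j`, `j = 1,2,3`. -/
def hTensor (a₁ a₂ a₃ : ℤ × ℤ) (N₁ N₂ N₃ : ℝ) (n n₁ n₂ n₃ : ℤ × ℤ) : ℂ :=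
  if n = n₁ - n₂ + n₃ ∧ n₂ ≠ n₁ ∧ n₂ ≠ n₃ ∧
      N₁ ≤ jbZ (n₁ - a₁) ∧ jbZ (n₁ - a₁) ≤ 2 * N₁ ∧
      N₂ ≤ jbZ (n₂ - a₂) ∧ jbZ (n₂ - a₂) ≤ 2 * N₂ ∧
      N₃ ≤ jbZ (n₃ - a₃) ∧ jbZ (n₃ - a₃) ≤ 2 * N₃
  then 1 else 0

/-- The tensor `h^m = h · 1[κ = m]`, supported on a fixed value `m` of the phase `κ`. -/
def hTensorK (a₁ a₂ a₃ : ℤ × ℤ) (N₁ N₂ N₃ : ℝ) (m : ℤ) (n n₁ n₂ n₃ : ℤ × ℤ) : ℂ :=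
  if kappa n n₁ n₂ n₃ = m then hTensor a₁ a₂ a₃ N₁ N₂ N₃ n n₁ n₂ n₃ else 0

/-- The `ℓ²((ℤ²)^B) → ℓ²((ℤ²)^C)` operator norm for the grouping `n → n₁n₂n₃`. -/
def opNorm_n (h : (ℤ × ℤ) → (ℤ × ℤ) → (ℤ × ℤ) → (ℤ × ℤ) → ℂ) : ℝ≥0∞ :=
  (⨆ (f : (ℤ × ℤ) → ℂ) (_ : (∑' n : ℤ × ℤ, ‖f n‖ ^ 2) = 1),
    ∑' m : (ℤ × ℤ) × (ℤ × ℤ) × (ℤ × ℤ),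
      ENNReal.ofReal (‖∑' n : ℤ × ℤ, h n m.1 m.2.1 m.2.2 * f n‖ ^ 2)) ^ ((1 : ℝ) / 2)

/-- Operator norm for the grouping `n₁ → n n₂ n₃`. -/
def opNorm_n1 (h : (ℤ × ℤ) → (ℤ × ℤ) → (ℤ × ℤ) → (ℤ × ℤ) → ℂ) : ℝ≥0∞ :=
  (⨆ (f : (ℤ × ℤ) → ℂ) (_ : (∑' n₁ : ℤ × ℤ, ‖f n₁‖ ^ 2) = 1),
    ∑' m : (ℤ × ℤ) × (ℤ × ℤ) × (ℤ × ℤ),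
      ENNReal.ofReal (‖∑' n₁ : ℤ × ℤ, h m.1 n₁ m.2.1 m.2.2 * f n₁‖ ^ 2)) ^ ((1 : ℝ) / 2)

/-- Operator norm for the grouping `n n₂ → n₁ n₃`. -/
def opNorm_nn2 (h : (ℤ × ℤ) → (ℤ × ℤ) → (ℤ × ℤ) → (ℤ × ℤ) → ℂ) : ℝ≥0∞ :=
  (⨆ (f : (ℤ × ℤ) × (ℤ × ℤ) → ℂ) (_ : (∑' q : (ℤ × ℤ) × (ℤ × ℤ), ‖f q‖ ^ 2) = 1),
    ∑' m : (ℤ × ℤ) × (ℤ × ℤ),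
      ENNReal.ofReal (‖∑' q : (ℤ × ℤ) × (ℤ × ℤ), h q.1 m.1 q.2 m.2 * f q‖ ^ 2)) ^ ((1 : ℝ) / 2)

/-- Operator norm for the grouping `n n₃ → n₁ n₂`. -/
def opNorm_nn3 (h : (ℤ × ℤ) → (ℤ × ℤ) → (ℤ × ℤ) → (ℤ × ℤ) → ℂ) : ℝ≥0∞ :=
  (⨆ (f : (ℤ × ℤ) × (ℤ × ℤ) → ℂ) (_ : (∑' q : (ℤ × ℤ) × (ℤ × ℤ), ‖f q‖ ^ 2) = 1),
    ∑' m : (ℤ × ℤ) × (ℤ × ℤ),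
      ENNReal.ofReal (‖∑' q : (ℤ × ℤ) × (ℤ × ℤ), h q.1 m.1 m.2 q.2 * f q‖ ^ 2)) ^ ((1 : ℝ) / 2)

/-- Operator norm for the grouping `n n₁ → n₂ n₃`. -/
def opNorm_nn1 (h : (ℤ × ℤ) → (ℤ × ℤ) → (ℤ × ℤ) → (ℤ × ℤ) → ℂ) : ℝ≥0∞ :=
  (⨆ (f : (ℤ × ℤ) × (ℤ × ℤ) → ℂ) (_ : (∑' q : (ℤ × ℤ) × (ℤ × ℤ), ‖f q‖ ^ 2) = 1),
    ∑' m : (ℤ × ℤ) × (ℤ × ℤ),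
      ENNReal.ofReal (‖∑' q : (ℤ × ℤ) × (ℤ × ℤ), h q.1 q.2 m.1 m.2 * f q‖ ^ 2)) ^ ((1 : ℝ) / 2)

/-- The norm `‖h‖₁ = max( ‖h‖_{n→n₁n₂n₃}, ‖h‖_{n₁→nn₂n₃}, ‖h‖_{nn₂→n₁n₃}, ‖h‖_{nn₃→n₁n₂} )`. -/
def tNorm1 (h : (ℤ × ℤ) → (ℤ × ℤ) → (ℤ × ℤ) → (ℤ × ℤ) → ℂ) : ℝ≥0∞ :=
  max (max (opNorm_n h) (opNorm_n1 h)) (max (opNorm_nn2 h) (opNorm_nn3 h))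

/-- The norm `‖h‖₂ = max( ‖h‖_{n→n₁n₂n₃}, ‖h‖_{nn₁→n₂n₃} )`. -/
def tNorm2 (h : (ℤ × ℤ) → (ℤ × ℤ) → (ℤ × ℤ) → (ℤ × ℤ) → ℂ) : ℝ≥0∞ :=
  max (opNorm_n h) (opNorm_nn1 h)

/-! ### Gaussian integers of given norm -/

/-- The Gaussian primes above `p`: `g₁ = g₂ = p` if `p` is inert, and a factor of norm `p` together
with its conjugate otherwise. -/
lemma exists_gaussian_divisors (p : ℕ) (hp : p.Prime) :
    ∃ g₁ g₂ : GaussianInt, (∃ j, 0 < j ∧ g₁.norm = (p : ℤ) ^ j) ∧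
      (∃ j, 0 < j ∧ g₂.norm = (p : ℤ) ^ j) ∧
      ∀ z : GaussianInt, (p : ℤ) ∣ z.norm → g₁ ∣ z ∨ g₂ ∣ z := by
  have : Fact p.Prime := ⟨hp⟩
  have hmul : ∀ z : GaussianInt, (p : ℤ) ∣ z.norm → (p : GaussianInt) ∣ z * star z := by
    rintro z ⟨c, hc⟩
    rw [← Zsqrtd.norm_eq_mul_conj, hc]
    exact ⟨(c : GaussianInt), by push_cast; rfl⟩
  by_cases hirr : Irreducible (p : GaussianInt)
  · have hpr : Prime (p : GaussianInt) := hirr.prime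
    have hnorm : (p : GaussianInt).norm = (p : ℤ) ^ 2 := by
      rw [Zsqrtd.norm_natCast]; ring
    refine ⟨p, p, ⟨2, by norm_num, hnorm⟩, ⟨2, by norm_num, hnorm⟩, fun z hz => Or.inl ?_⟩
    rcases hpr.dvd_or_dvd (hmul z hz) with h | h
    · exact h
    · obtain ⟨c, hc⟩ := h
      refine ⟨star c, ?_⟩
      rw [← star_star z, hc, star_mul, star_natCast, mul_comm]
  · obtain ⟨a, b, hab⟩ := GaussianInt.sq_add_sq_of_nat_prime_of_not_irreducible p hirr
    set g : GaussianInt := ⟨a, b⟩ with hg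
    have hnorm : g.norm = (p : ℤ) := by
      rw [Zsqrtd.norm_def, ← hab]; push_cast [hg]; ring
    have hnorm' : (star g).norm = (p : ℤ) := by rw [Zsqrtd.norm_conj, hnorm]
    have hgirr : Irreducible g := by
      refine ⟨fun h => ?_, fun x y hxy => ?_⟩
      · rw [← Zsqrtd.norm_eq_one_iff, hnorm] at h
        exact hp.one_lt.ne' (by simpa using h)
      · have : x.norm.natAbs * y.norm.natAbs = p := by
          rw [← Int.natAbs_mul, ← Zsqrtd.norm_mul, ← hxy, hnorm]; simp
        rw [← Zsqrtd.norm_eq_one_iff, ← Zsqrtd.norm_eq_one_iff]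
        rcases (Nat.prime_mul_iff.1 (this ▸ hp)) with h | h
        · exact Or.inr h.2
        · exact Or.inl h.2
    have hgpr : Prime g := hgirr.prime
    have hgp : g ∣ (p : GaussianInt) := by
      refine ⟨star g, ?_⟩
      rw [← Zsqrtd.norm_eq_mul_conj, hnorm]; simp
    refine ⟨g, star g, ⟨1, by norm_num, by simpa using hnorm⟩,
      ⟨1, by norm_num, by simpa using hnorm'⟩, fun z hz => ?_⟩
    rcases hgpr.dvd_or_dvd (hgp.trans (hmul z hz)) with h | h
    · exact Or.inl h
    · obtain ⟨c, hc⟩ := h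
      refine Or.inr ⟨star c, ?_⟩
      rw [← star_star z, hc, star_mul, mul_comm]

/-- The `p`-part of a norm is accounted for by `g₁` and `g₂`: an element of norm `p ^ k * m` is
`g₁ ^ a * g₂ ^ b * y` with `y` of norm `m`. The unit ambiguity is absorbed in `y`. -/
lemma factor_prime_part {p : ℕ} (hp : p.Prime) {g₁ g₂ : GaussianInt}
    (h₁ : ∃ j, 0 < j ∧ g₁.norm = (p : ℤ) ^ j) (h₂ : ∃ j, 0 < j ∧ g₂.norm = (p : ℤ) ^ j)
    (hg : ∀ z : GaussianInt, (p : ℤ) ∣ z.norm → g₁ ∣ z ∨ g₂ ∣ z)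
    {m : ℕ} (hm : ¬ p ∣ m) (k : ℕ) :
    ∀ z : GaussianInt, z.norm = ((p ^ k * m : ℕ) : ℤ) →
      ∃ a b : ℕ, ∃ y : GaussianInt, a ≤ k ∧ b ≤ k ∧ y.norm = (m : ℤ) ∧
        g₁ ^ a * g₂ ^ b * y = z := by
  have hp0 : (p : ℤ) ≠ 0 := by exact_mod_cast hp.ne_zero
  -- dividing by an element of norm `p ^ j` lowers the exponent by `j`
  have key : ∀ (g z' : GaussianInt) (j k : ℕ), g.norm = (p : ℤ) ^ j →
      (g * z').norm = ((p ^ k * m : ℕ) : ℤ) →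
      j ≤ k ∧ z'.norm = ((p ^ (k - j) * m : ℕ) : ℤ) := by
    intro g z' j k hgj hz
    rw [Zsqrtd.norm_mul, hgj] at hz
    have hjk : j ≤ k := by
      by_contra hlt
      push Not at hlt
      have hd : p ^ j ∣ p ^ k * m := by
        have : ((p ^ j : ℕ) : ℤ) ∣ ((p ^ k * m : ℕ) : ℤ) := ⟨z'.norm, by rw [← hz]; push_cast; rfl⟩
        exact_mod_cast this
      have : p ^ (k + 1) ∣ p ^ k * m := (pow_dvd_pow p hlt).trans hd
      rw [pow_succ] at this
      exact hm (Nat.dvd_of_mul_dvd_mul_left (pow_pos hp.pos k) this)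
    refine ⟨hjk, ?_⟩
    have : (p : ℤ) ^ j * z'.norm = (p : ℤ) ^ j * ((p ^ (k - j) * m : ℕ) : ℤ) := by
      rw [hz]; push_cast
      rw [← mul_assoc, ← pow_add, Nat.add_sub_cancel' hjk]
    exact mul_left_cancel₀ (pow_ne_zero _ hp0) this
  induction k using Nat.strong_induction_on with
  | _ k ih =>
    intro z hz
    rcases Nat.eq_zero_or_pos k with rfl | hk
    · exact ⟨0, 0, z, le_rfl, le_rfl, by simpa using hz, by simp⟩
    · have hpz : (p : ℤ) ∣ z.norm := by
        rw [hz]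
        exact_mod_cast (dvd_pow_self p hk.ne').mul_right m
      rcases hg z hpz with ⟨z', rfl⟩ | ⟨z', rfl⟩
      · obtain ⟨j, hj, hgj⟩ := h₁
        obtain ⟨hjk, hz'⟩ := key _ _ _ _ hgj hz
        obtain ⟨a, b, y, ha, hb, hy, rfl⟩ := ih (k - j) (by omega) z' hz'
        exact ⟨a + 1, b, y, by omega, by omega, hy, by ring⟩
      · obtain ⟨j, hj, hgj⟩ := h₂
        obtain ⟨hjk, hz'⟩ := key _ _ _ _ hgj hz
        obtain ⟨a, b, y, ha, hb, hy, rfl⟩ := ih (k - j) (by omega) z' hz'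
        exact ⟨a, b + 1, y, by omega, by omega, hy, by ring⟩

/-- Passing from norm `m` to norm `p ^ k * m` multiplies the number of Gaussian integers by at most
`(k + 1) ^ 2`, the number of exponent pairs `(a, b)` in `factor_prime_part`. Cardinalities are
compared through arbitrary finsets, so that no finiteness statement is needed. -/
lemma card_norm_eq_step {p : ℕ} (hp : p.Prime) {m : ℕ} (hm : ¬ p ∣ m) (k : ℕ)
    (T : Finset GaussianInt) (hT : ∀ z ∈ T, z.norm = ((p ^ k * m : ℕ) : ℤ)) :
    ∃ S : Finset GaussianInt, (∀ z ∈ S, z.norm = (m : ℤ)) ∧ T.card ≤ (k + 1) ^ 2 * S.card := by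
  classical
  obtain ⟨g₁, g₂, h₁, h₂, hg⟩ := exists_gaussian_divisors p hp
  have H := fun z : T => factor_prime_part hp h₁ h₂ hg hm k z.1 (hT z.1 z.2)
  choose a b y ha hb hy hz using H
  refine ⟨Finset.univ.image y, ?_, ?_⟩
  · intro z hz'
    obtain ⟨w, -, rfl⟩ := Finset.mem_image.1 hz'
    exact hy w
  have hsub : T ⊆ ((Finset.range (k + 1) ×ˢ Finset.range (k + 1)) ×ˢ Finset.univ.image y).image
      (fun q => g₁ ^ q.1.1 * g₂ ^ q.1.2 * q.2) := by
    intro z hzT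
    rw [Finset.mem_image]
    refine ⟨((a ⟨z, hzT⟩, b ⟨z, hzT⟩), y ⟨z, hzT⟩), ?_, hz ⟨z, hzT⟩⟩
    simp only [Finset.mem_product, Finset.mem_range]
    exact ⟨⟨Nat.lt_succ_of_le (ha _), Nat.lt_succ_of_le (hb _)⟩,
      Finset.mem_image_of_mem _ (Finset.mem_univ _)⟩
  calc T.card ≤ _ := (Finset.card_le_card hsub).trans Finset.card_image_le
    _ = _ := by simp [Finset.card_product, sq]

lemma exists_sq_le_mul_pow (a : ℝ) (ha : 1 < a) :
    ∃ K : ℝ, 1 ≤ K ∧ ∀ k : ℕ, ((k : ℝ) + 1) ^ 2 ≤ K * a ^ k := by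
  obtain ⟨B, hB⟩ := (tendsto_pow_const_div_const_pow_of_one_lt 2 ha).bddAbove_range
  refine ⟨max 1 (B * a), le_max_left _ _, fun k => ?_⟩
  have h := hB ⟨k + 1, rfl⟩
  have ha0 : 0 < a := by linarith
  simp only at h
  rw [div_le_iff₀ (by positivity)] at h
  push_cast at h
  calc ((k : ℝ) + 1) ^ 2 ≤ B * a ^ (k + 1) := h
    _ = (B * a) * a ^ k := by ring
    _ ≤ _ := by gcongr; exact le_max_right _ _

/-- The divisor-type bound `r₂(n) = O(n ^ ε)` for the number of representations of `n` as a sum of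
two squares. A prime power `p ^ k` in `n` costs a factor `(k + 1) ^ 2`, at most `(p ^ ε) ^ k` once
`p ^ ε ≥ 4`; only the boundedly many smaller primes cost an additional constant `K` each. -/
lemma card_norm_eq_le (ε : ℝ) (hε : 0 < ε) :
    ∃ C : ℝ, 1 ≤ C ∧ ∀ (n : ℕ), 0 < n → ∀ T : Finset GaussianInt,
      (∀ z ∈ T, z.norm = (n : ℤ)) → (T.card : ℝ) ≤ C * (n : ℝ) ^ ε := by
  classical
  obtain ⟨K, hK1, hK⟩ := exists_sq_le_mul_pow ((2 : ℝ) ^ ε) (Real.one_lt_rpow (by norm_num) hε)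
  -- primes `p ≥ P` satisfy `p ^ ε ≥ 4`
  obtain ⟨P, hP⟩ := exists_nat_ge ((4 : ℝ) ^ (1 / ε))
  have main : ∀ n : ℕ, 0 < n → ∀ T : Finset GaussianInt, (∀ z ∈ T, z.norm = (n : ℤ)) →
      (T.card : ℝ) ≤ 4 * (K ^ (n.primeFactors.filter (· < P)).card * (n : ℝ) ^ ε) := by
    intro n
    induction n using Nat.recOnPrimePow with
    | zero => intro h; exact absurd h (lt_irrefl 0)
    | one =>
      intro _ T hT
      -- the four units
      have hsub : T ⊆ {⟨1, 0⟩, ⟨-1, 0⟩, ⟨0, 1⟩, ⟨0, -1⟩} := by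
        intro z hz
        have h := hT z hz
        rw [Zsqrtd.norm_def] at h
        obtain ⟨x, y⟩ := z
        have hx : x ≤ 1 := by push_cast at h; nlinarith [mul_self_nonneg y]
        have hx' : -1 ≤ x := by push_cast at h; nlinarith [mul_self_nonneg y]
        have hy : y ≤ 1 := by push_cast at h; nlinarith [mul_self_nonneg x]
        have hy' : -1 ≤ y := by push_cast at h; nlinarith [mul_self_nonneg x]
        interval_cases x <;> interval_cases y <;> simp_all
      have : T.card ≤ 4 := (Finset.card_le_card hsub).trans Finset.card_le_four
      have : (T.card : ℝ) ≤ 4 := by exact_mod_cast this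
      simpa using this
    | prime_pow_mul m p k hp hpm hk ih =>
      intro hn T hT
      have hm0 : 0 < m := Nat.pos_of_ne_zero (by rintro rfl; simp at hpm)
      obtain ⟨S, hS, hTS⟩ := card_norm_eq_step hp hpm k T hT
      have ihS := ih hm0 S hS
      have hT' : (T.card : ℝ) ≤ ((k : ℝ) + 1) ^ 2 * S.card := by exact_mod_cast hTS
      have hpow : ((p ^ k * m : ℕ) : ℝ) ^ ε = ((p : ℝ) ^ ε) ^ k * (m : ℝ) ^ ε := by
        push_cast
        rw [Real.mul_rpow (by positivity) (by positivity), ← Real.rpow_natCast,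
          ← Real.rpow_natCast, ← Real.rpow_mul (by positivity), ← Real.rpow_mul (by positivity),
          mul_comm ε]
      have hpf : (p ^ k * m).primeFactors = insert p m.primeFactors := by
        rw [Nat.primeFactors_mul (pow_ne_zero _ hp.ne_zero) hm0.ne',
          Nat.primeFactors_prime_pow hk.ne' hp]
        rfl
      have hpn : p ∉ m.primeFactors := fun h => hpm (Nat.dvd_of_mem_primeFactors h)
      have hK0 : 0 < K := by linarith
      rw [hpow, hpf]
      by_cases hpP : p < P
      · rw [Finset.filter_insert, if_pos hpP, Finset.card_insert_of_notMem (by simp [hpn])]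
        have h2 : ((k : ℝ) + 1) ^ 2 ≤ K * ((p : ℝ) ^ ε) ^ k := by
          refine (hK k).trans ?_
          gcongr
          exact_mod_cast hp.two_le
        calc (T.card : ℝ) ≤ _ := hT'
          _ ≤ (K * ((p : ℝ) ^ ε) ^ k) * (4 * (K ^ (m.primeFactors.filter (· < P)).card *
              (m : ℝ) ^ ε)) := by gcongr
          _ = _ := by ring
      · rw [Finset.filter_insert, if_neg hpP]
        have h4 : (4 : ℝ) ≤ (p : ℝ) ^ ε := by
          have : (4 : ℝ) ^ (1 / ε) ≤ p := hP.trans (by exact_mod_cast not_lt.1 hpP)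
          calc (4 : ℝ) = ((4 : ℝ) ^ (1 / ε)) ^ ε := by
                rw [← Real.rpow_mul (by norm_num)]; field_simp; simp
            _ ≤ _ := by gcongr
        have h2 : ((k : ℝ) + 1) ^ 2 ≤ ((p : ℝ) ^ ε) ^ k := by
          have h : ((k : ℝ) + 1) ≤ 2 ^ k := by exact_mod_cast Nat.lt_two_pow_self (n := k)
          calc ((k : ℝ) + 1) ^ 2 ≤ (2 ^ k) ^ 2 := by gcongr
            _ = 4 ^ k := by rw [← pow_mul, mul_comm, pow_mul]; norm_num
            _ ≤ _ := by gcongr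
        calc (T.card : ℝ) ≤ _ := hT'
          _ ≤ (((p : ℝ) ^ ε) ^ k) * (4 * (K ^ (m.primeFactors.filter (· < P)).card *
              (m : ℝ) ^ ε)) := by gcongr
          _ = _ := by ring
  refine ⟨4 * K ^ P, ?_, fun n hn T hT => (main n hn T hT).trans ?_⟩
  · have := one_le_pow₀ (n := P) hK1
    linarith
  · rw [← mul_assoc]
    gcongr
    calc (n.primeFactors.filter (· < P)).card ≤ (Finset.range P).card :=
          Finset.card_le_card (fun x hx => by
            rw [Finset.mem_filter] at hx; exact Finset.mem_range.2 hx.2)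
        _ = P := Finset.card_range P

/-! ### Lattice points on circular arcs -/

lemma intPair_norm_le_iff (z : ℤ × ℤ) (D : ℝ) :
    ‖z‖ ≤ D ↔ |(z.1 : ℝ)| ≤ D ∧ |(z.2 : ℝ)| ≤ D := by
  rw [Prod.norm_def, max_le_iff, Int.norm_eq_abs, Int.norm_eq_abs]

/-- The relation `(abc)² = 16 · Area² · R` between the sides `a`, `b`, `c` and the area of a triangle
inscribed in a circle of squared radius `R`; the determinant on the right is twice the area. -/
lemma heron_circle {R x₁ y₁ x₂ y₂ x₃ y₃ : ℤ} (h₁ : x₁ ^ 2 + y₁ ^ 2 = R)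
    (h₂ : x₂ ^ 2 + y₂ ^ 2 = R) (h₃ : x₃ ^ 2 + y₃ ^ 2 = R) :
    ((x₁ - x₂) ^ 2 + (y₁ - y₂) ^ 2) * ((x₂ - x₃) ^ 2 + (y₂ - y₃) ^ 2) *
        ((x₁ - x₃) ^ 2 + (y₁ - y₃) ^ 2) =
      4 * R * ((x₂ - x₁) * (y₃ - y₁) - (x₃ - x₁) * (y₂ - y₁)) ^ 2 := by
  grind

/-- A circle centred at the origin has `O(D ^ θ)` lattice points in a set of diameter `D`, uniformly
in its squared radius `R`. If there are three such points, then `R ≤ 2 * D ^ 6`, and the bound on all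
lattice points of the circle suffices. -/
lemma card_arc_le (θ : ℝ) (hθ : 0 < θ) :
    ∃ C : ℝ, 1 ≤ C ∧ ∀ (R : ℤ) (D : ℝ), 1 ≤ D → ∀ T : Finset (ℤ × ℤ),
      (∀ z ∈ T, z.1 ^ 2 + z.2 ^ 2 = R) → (∀ z ∈ T, ∀ w ∈ T, ‖z - w‖ ≤ D) →
      (T.card : ℝ) ≤ C * D ^ θ := by
  classical
  obtain ⟨C, hC1, hC⟩ := card_norm_eq_le (θ / 6) (by positivity)
  have h2 : (1 : ℝ) ≤ 2 ^ (θ / 6) := Real.one_le_rpow (by norm_num) (by positivity)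
  refine ⟨2 * C * 2 ^ (θ / 6), by nlinarith, fun R D hD T hT hTD => ?_⟩
  have hDθ : (1 : ℝ) ≤ D ^ θ := Real.one_le_rpow hD hθ.le
  have hCC : 1 ≤ C * 2 ^ (θ / 6) := by nlinarith
  by_cases hcard : T.card ≤ 2
  · have : (T.card : ℝ) ≤ 2 := by exact_mod_cast hcard
    nlinarith
  · obtain ⟨a, b, c, ha, hb, hc, hab, hac, hbc⟩ := Finset.two_lt_card_iff.1 (not_le.1 hcard)
    have hid := heron_circle (hT a ha) (hT b hb) (hT c hc)
    set Δ : ℤ := (b.1 - a.1) * (c.2 - a.2) - (c.1 - a.1) * (b.2 - a.2) with hΔ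
    have hpos : ∀ p q : ℤ × ℤ, p ≠ q → 0 < (p.1 - q.1) ^ 2 + (p.2 - q.2) ^ 2 := by
      intro p q hpq
      rcases eq_or_ne p.1 q.1 with h | h
      · have : p.2 - q.2 ≠ 0 := fun h' => hpq (Prod.ext h (by linarith))
        positivity
      · have : p.1 - q.1 ≠ 0 := sub_ne_zero.2 h
        positivity
    have hprod : 0 < 4 * R * Δ ^ 2 := by
      rw [← hid]
      exact mul_pos (mul_pos (hpos _ _ hab) (hpos _ _ hbc)) (hpos _ _ hac)
    have hΔ0 : Δ ≠ 0 := by rintro h; simp [h] at hprod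
    -- distinct points of a circle are not collinear, and `Δ` is an integer
    have hΔ1 : 1 ≤ Δ ^ 2 := by
      have : 0 < Δ ^ 2 := by positivity
      linarith
    have hR : 0 < R := by
      by_contra h
      exact absurd hprod (not_lt.2 (mul_nonpos_of_nonpos_of_nonneg (by linarith) (sq_nonneg Δ)))
    have hdist : ∀ p ∈ T, ∀ q ∈ T,
        (((p.1 - q.1) ^ 2 + (p.2 - q.2) ^ 2 : ℤ) : ℝ) ≤ 2 * D ^ 2 := by
      intro p hp q hq
      obtain ⟨h₁, h₂⟩ := (intPair_norm_le_iff _ _).1 (hTD p hp q hq)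
      have h₁' := sq_le_sq' (by linarith [abs_le.1 h₁]) (abs_le.1 h₁).2
      have h₂' := sq_le_sq' (by linarith [abs_le.1 h₂]) (abs_le.1 h₂).2
      push_cast [Prod.fst_sub, Prod.snd_sub] at h₁' h₂' ⊢
      linarith
    have hRD : (R : ℝ) ≤ 2 * D ^ 6 := by
      have e1 : (4 * (R : ℝ)) ≤ ((4 * R * Δ ^ 2 : ℤ) : ℝ) := by
        have : 4 * R ≤ 4 * R * Δ ^ 2 := le_mul_of_one_le_right (by positivity) hΔ1
        exact_mod_cast this
      have e2 : ((4 * R * Δ ^ 2 : ℤ) : ℝ) ≤ (2 * D ^ 2) * (2 * D ^ 2) * (2 * D ^ 2) := by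
        rw [← hid, Int.cast_mul, Int.cast_mul]
        have p1 : (0 : ℝ) ≤ ((b.1 - c.1) ^ 2 + (b.2 - c.2) ^ 2 : ℤ) := by
          exact_mod_cast (hpos _ _ hbc).le
        have p2 : (0 : ℝ) ≤ ((a.1 - c.1) ^ 2 + (a.2 - c.2) ^ 2 : ℤ) := by
          exact_mod_cast (hpos _ _ hac).le
        exact mul_le_mul (mul_le_mul (hdist a ha b hb) (hdist b hb c hc) p1 (by positivity))
          (hdist a ha c hc) p2 (by positivity)
      linarith
    obtain ⟨n, rfl⟩ := Int.eq_ofNat_of_zero_le hR.le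
    have hn : 0 < n := by exact_mod_cast hR
    let e : ℤ × ℤ ↪ GaussianInt := ⟨fun z => ⟨z.1, z.2⟩, fun z w h => by
      rw [Zsqrtd.ext_iff] at h; exact Prod.ext h.1 h.2⟩
    have hcount := hC n hn (T.map e) (by
      intro z hz
      obtain ⟨w, hw, rfl⟩ := Finset.mem_map.1 hz
      rw [← hT w hw, Zsqrtd.norm_def]
      change w.1 * w.1 - -1 * w.2 * w.2 = _
      ring)
    rw [Finset.card_map] at hcount
    have hpow : (n : ℝ) ^ (θ / 6) ≤ 2 ^ (θ / 6) * D ^ θ := by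
      calc (n : ℝ) ^ (θ / 6) ≤ (2 * D ^ 6) ^ (θ / 6) := by
            gcongr
            exact_mod_cast hRD
        _ = _ := by
            rw [Real.mul_rpow (by norm_num) (by positivity), ← Real.rpow_natCast,
              ← Real.rpow_mul (by positivity)]
            congr 2
            push_cast; ring
    have hC0 : 0 < C := by linarith
    calc (T.card : ℝ) ≤ C * (n : ℝ) ^ (θ / 6) := hcount
      _ ≤ C * (2 ^ (θ / 6) * D ^ θ) := by gcongr
      _ ≤ 2 * (C * (2 ^ (θ / 6) * D ^ θ)) := by
          have : 0 ≤ C * (2 ^ (θ / 6) * D ^ θ) := by positivity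
          linarith
      _ = _ := by ring

/-! ### Lattice points on lines -/

lemma card_progression_le (c v₀ : ℤ × ℤ) (hc : 0 < ‖c‖) (D : ℝ) (T : Finset (ℤ × ℤ))
    (hT : ∀ v ∈ T, ∃ t : ℤ, v = v₀ + t • c) (hD : ∀ v ∈ T, ‖v - v₀‖ ≤ D) (hD0 : 0 ≤ D) :
    (T.card : ℝ) ≤ 1 + 2 * D / ‖c‖ := by
  classical
  set F : ℕ := ⌊D / ‖c‖⌋₊ with hF
  have hsub : T ⊆ (Finset.Icc (-(F : ℤ)) F).image (fun t : ℤ => v₀ + t • c) := by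
    intro v hv
    obtain ⟨t, rfl⟩ := hT v hv
    refine Finset.mem_image.2 ⟨t, ?_, rfl⟩
    have h := hD _ hv
    rw [add_sub_cancel_left, norm_smul, Int.norm_eq_abs, ← le_div_iff₀ hc] at h
    have h2 : t.natAbs ≤ F := by
      rw [hF]
      apply Nat.le_floor
      rwa [Nat.cast_natAbs, Int.cast_abs]
    rw [Finset.mem_Icc]
    omega
  have h1 : T.card ≤ 2 * F + 1 := by
    refine ((Finset.card_le_card hsub).trans Finset.card_image_le).trans ?_
    rw [Int.card_Icc]; omega
  have h2 : (F : ℝ) ≤ D / ‖c‖ := Nat.floor_le (by positivity)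
  have h3 : (T.card : ℝ) ≤ 2 * F + 1 := by exact_mod_cast h1
  rw [mul_div_assoc]
  linarith

/-- The primitive lattice vector in the direction of `u` (and `0` for `u = 0`). -/
def primPart (u : ℤ × ℤ) : ℤ × ℤ := (u.1 / Int.gcd u.1 u.2, u.2 / Int.gcd u.1 u.2)

lemma primPart_spec {u : ℤ × ℤ} (hu : u ≠ 0) :
    IsCoprime (primPart u).1 (primPart u).2 ∧ u = (Int.gcd u.1 u.2 : ℤ) • primPart u := by
  have hg : 0 < Int.gcd u.1 u.2 := by
    rw [Int.gcd_pos_iff]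
    by_contra h
    push Not at h
    exact hu (Prod.ext h.1 h.2)
  refine ⟨?_, ?_⟩
  · rw [Int.isCoprime_iff_gcd_eq_one]
    exact Int.gcd_div_gcd_div_gcd hg
  · refine Prod.ext ?_ ?_
    · simp [primPart, Int.mul_ediv_cancel' (Int.gcd_dvd_left _ _)]
    · simp [primPart, Int.mul_ediv_cancel' (Int.gcd_dvd_right _ _)]

/-- The integer `max(|b₁|,|b₂|)`. -/
def supAbs (b : ℤ × ℤ) : ℕ := max b.1.natAbs b.2.natAbs

lemma norm_eq_supAbs (b : ℤ × ℤ) : ‖b‖ = supAbs b := by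
  rw [Prod.norm_def, Int.norm_eq_abs, Int.norm_eq_abs, supAbs, Nat.cast_max]
  simp [Nat.cast_natAbs]

lemma one_le_supAbs_primPart {u : ℤ × ℤ} (hu : u ≠ 0) : 1 ≤ supAbs (primPart u) := by
  by_contra h
  have h0 : supAbs (primPart u) = 0 := by omega
  have : primPart u = 0 := by rw [← norm_eq_zero, norm_eq_supAbs, h0]; simp
  apply hu
  rw [(primPart_spec hu).2, this, smul_zero]

lemma exists_eq_smul_of_orthogonal {b d : ℤ × ℤ} (hb : IsCoprime b.1 b.2)
    (h : b.1 * d.1 + b.2 * d.2 = 0) : ∃ t : ℤ, d = t • ((-b.2, b.1) : ℤ × ℤ) := by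
  obtain ⟨x, y, hxy⟩ := hb
  refine ⟨x * d.2 - y * d.1, Prod.ext ?_ ?_⟩
  · simp only [Prod.smul_mk, smul_eq_mul]
    linear_combination (-d.1) * hxy + x * h
  · simp only [Prod.smul_mk, smul_eq_mul]
    linear_combination (-d.2) * hxy + y * h

/-- The lattice points of the line `u · v = k` form a progression whose step is the primitive vector
of `u` rotated by a right angle. -/
lemma card_line_le {u : ℤ × ℤ} (hu : u ≠ 0) (k : ℤ) (D : ℝ) (hD0 : 0 ≤ D) (T : Finset (ℤ × ℤ))
    (hT : ∀ v ∈ T, u.1 * v.1 + u.2 * v.2 = k) (hD : ∀ v ∈ T, ∀ w ∈ T, ‖v - w‖ ≤ D) :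
    (T.card : ℝ) ≤ 1 + 2 * D / supAbs (primPart u) := by
  have hb := one_le_supAbs_primPart hu
  rcases T.eq_empty_or_nonempty with rfl | ⟨v₀, hv₀⟩
  · simp only [Finset.card_empty, Nat.cast_zero]; positivity
  obtain ⟨hcop, hsmul⟩ := primPart_spec hu
  set g : ℤ := (Int.gcd u.1 u.2 : ℤ)
  set b := primPart u
  have hg : g ≠ 0 := by
    intro h; rw [h, zero_smul] at hsmul; exact hu hsmul
  have hnorm : ‖((-b.2, b.1) : ℤ × ℤ)‖ = supAbs b := by
    rw [norm_eq_supAbs]; simp [supAbs, max_comm]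
  have := card_progression_le (-b.2, b.1) v₀ (by rw [hnorm]; exact_mod_cast hb) D T ?_
    (fun v hv => hD v hv v₀ hv₀) hD0
  · rwa [hnorm] at this
  · intro v hv
    have h0 : b.1 * (v - v₀).1 + b.2 * (v - v₀).2 = 0 := by
      have e1 : u.1 = g * b.1 := congrArg Prod.fst hsmul
      have e2 : u.2 = g * b.2 := congrArg Prod.snd hsmul
      have h1 := hT v hv
      have h2 := hT v₀ hv₀
      rw [e1, e2] at h1 h2
      apply mul_left_cancel₀ hg
      simp only [Prod.fst_sub, Prod.snd_sub]
      linear_combination h1 - h2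
    obtain ⟨t, ht⟩ := exists_eq_smul_of_orthogonal hcop h0
    exact ⟨t, by rw [← ht]; abel⟩

lemma card_box_le (A : ℝ) (hA : 1 ≤ A) (U : Finset (ℤ × ℤ))
    (hU : ∀ u ∈ U, ∀ w ∈ U, ‖u - w‖ ≤ A) : (U.card : ℝ) ≤ 9 * A ^ 2 := by
  rcases U.eq_empty_or_nonempty with rfl | ⟨u₀, hu₀⟩
  · simp only [Finset.card_empty, Nat.cast_zero]; positivity
  set F : ℕ := ⌊A⌋₊ with hF
  have hsub : U ⊆ Finset.Icc (u₀.1 - F) (u₀.1 + F) ×ˢ Finset.Icc (u₀.2 - F) (u₀.2 + F) := by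
    intro u hu
    have h := hU u hu u₀ hu₀
    rw [norm_eq_supAbs] at h
    have h' : supAbs (u - u₀) ≤ F := Nat.le_floor h
    simp only [supAbs, Prod.fst_sub, Prod.snd_sub, max_le_iff] at h'
    simp only [Finset.mem_product, Finset.mem_Icc]
    omega
  have h1 : U.card ≤ (2 * F + 1) * (2 * F + 1) := by
    refine (Finset.card_le_card hsub).trans ?_
    rw [Finset.card_product, Int.card_Icc, Int.card_Icc]
    apply Nat.mul_le_mul <;> omega
  have h2 : (F : ℝ) ≤ A := Nat.floor_le (by positivity)
  have h3 : (U.card : ℝ) ≤ (2 * F + 1) * (2 * F + 1) := by exact_mod_cast h1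
  calc (U.card : ℝ) ≤ _ := h3
    _ ≤ (2 * A + A) * (2 * A + A) := by gcongr
    _ = _ := by ring

lemma card_supAbs_le (j : ℕ) (hj : 1 ≤ j) (B : Finset (ℤ × ℤ)) (hB : ∀ b ∈ B, supAbs b = j) :
    B.card ≤ 12 * j := by
  classical
  have hsub : B ⊆ (({-(j : ℤ), (j : ℤ)} : Finset ℤ) ×ˢ Finset.Icc (-(j : ℤ)) j) ∪
      (Finset.Icc (-(j : ℤ)) j ×ˢ ({-(j : ℤ), (j : ℤ)} : Finset ℤ)) := by
    intro b hb
    have h := hB b hb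
    simp only [supAbs] at h
    simp only [Finset.mem_union, Finset.mem_product, Finset.mem_insert, Finset.mem_singleton,
      Finset.mem_Icc]
    omega
  have h2 : ({-(j : ℤ), (j : ℤ)} : Finset ℤ).card ≤ 2 := Finset.card_le_two
  have hI : (Finset.Icc (-(j : ℤ)) j).card = 2 * j + 1 := by rw [Int.card_Icc]; omega
  refine (Finset.card_le_card hsub).trans ((Finset.card_union_le _ _).trans ?_)
  rw [Finset.card_product, Finset.card_product, hI]
  nlinarith

/-! ### Counting pairs -/

/-- The sum of `1 / |b(u)|`, where `b(u)` is the primitive vector in the direction of `u`, over a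
set of diameter `A` located anywhere. Terms with `|b(u)| > A` are bounded by `1 / A`. For each
`j ≤ A` there are at most `36 * A` points with `|b(u)| = j`, and these terms form a harmonic sum. -/
lemma sum_inv_primPart_le (A : ℝ) (hA : 1 ≤ A) (U : Finset (ℤ × ℤ)) (hU0 : ∀ u ∈ U, u ≠ 0)
    (hU : ∀ u ∈ U, ∀ w ∈ U, ‖u - w‖ ≤ A) :
    ∑ u ∈ U, (1 : ℝ) / supAbs (primPart u) ≤ 45 * A * (1 + Real.log A) := by
  classical
  have hA0 : 0 < A := by linarith
  have hlog : 0 ≤ Real.log A := Real.log_nonneg hA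
  set F : ℕ := ⌊A⌋₊ with hF
  have hFA : (F : ℝ) ≤ A := Nat.floor_le hA0.le
  have hF1 : 1 ≤ F := Nat.le_floor (by simpa using hA)
  rw [← Finset.sum_filter_add_sum_filter_not U (fun u => supAbs (primPart u) ≤ F)]
  have hfar : ∑ u ∈ U with ¬ supAbs (primPart u) ≤ F, (1 : ℝ) / supAbs (primPart u)
      ≤ 9 * A := by
    calc _ ≤ ∑ u ∈ U with ¬ supAbs (primPart u) ≤ F, (1 : ℝ) / A := by
          refine Finset.sum_le_sum fun u hu => ?_
          have h := (Finset.mem_filter.1 hu).2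
          have : A ≤ supAbs (primPart u) := by
            exact ((Nat.floor_lt hA0.le).1 (not_le.1 h)).le
          gcongr
      _ = ((U.filter fun u => ¬ supAbs (primPart u) ≤ F).card : ℝ) * (1 / A) := by
          rw [Finset.sum_const, nsmul_eq_mul]
      _ ≤ (9 * A ^ 2) * (1 / A) := by
          gcongr
          exact card_box_le A hA _ fun u hu w hw =>
            hU u (Finset.mem_filter.1 hu).1 w (Finset.mem_filter.1 hw).1
      _ = 9 * A := by field_simp
  have hline : ∀ b : ℤ × ℤ, 1 ≤ supAbs b →
      ((U.filter fun u => primPart u = b).card : ℝ) ≤ 1 + 2 * A / supAbs b := by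
    intro b hb
    rcases (U.filter fun u => primPart u = b).eq_empty_or_nonempty with h | ⟨u₀, hu₀⟩
    · rw [h, Finset.card_empty, Nat.cast_zero]; positivity
    · rw [← norm_eq_supAbs]
      rw [Finset.mem_filter] at hu₀
      refine card_progression_le b u₀ (by rw [norm_eq_supAbs]; exact_mod_cast hb) A _ ?_ ?_ hA0.le
      · intro u hu
        rw [Finset.mem_filter] at hu
        have e1 := (primPart_spec (hU0 u hu.1)).2
        have e2 := (primPart_spec (hU0 u₀ hu₀.1)).2
        rw [hu.2] at e1
        rw [hu₀.2] at e2
        refine ⟨(Int.gcd u.1 u.2 : ℤ) - Int.gcd u₀.1 u₀.2, ?_⟩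
        rw [sub_smul, ← e1, ← e2]; abel
      · intro u hu
        exact hU u (Finset.mem_filter.1 hu).1 u₀ hu₀.1
  -- at most `12 * j` directions, each a line with at most `1 + 2 * A / j` points
  have hlevel : ∀ j ∈ Finset.Icc 1 F,
      ((U.filter fun u => supAbs (primPart u) = j).card : ℝ) ≤ 36 * A := by
    intro j hj
    rw [Finset.mem_Icc] at hj
    have hjA : (j : ℝ) ≤ A := (Nat.cast_le.2 hj.2).trans hFA
    have hj0 : (0 : ℝ) < j := by exact_mod_cast hj.1
    set V := U.filter fun u => supAbs (primPart u) = j with hV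
    have himg : ∀ b ∈ V.image primPart, supAbs b = j := by
      intro b hb
      obtain ⟨u, hu, rfl⟩ := Finset.mem_image.1 hb
      exact (Finset.mem_filter.1 hu).2
    have hcard : ((V.image primPart).card : ℝ) ≤ 12 * j := by
      exact_mod_cast card_supAbs_le j hj.1 _ himg
    calc (V.card : ℝ) = ∑ b ∈ V.image primPart, ((V.filter fun u => primPart u = b).card : ℝ) := by
          rw [Finset.card_eq_sum_card_image primPart V, Nat.cast_sum]
      _ ≤ ∑ b ∈ V.image primPart, (1 + 2 * A / j) := by
          refine Finset.sum_le_sum fun b hb => ?_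
          have hbj := himg b hb
          rw [← hbj]
          refine le_trans ?_ (hline b (by omega))
          exact_mod_cast Finset.card_le_card
            (Finset.filter_subset_filter _ (Finset.filter_subset _ _))
      _ = ((V.image primPart).card : ℝ) * (1 + 2 * A / j) := by
          rw [Finset.sum_const, nsmul_eq_mul]
      _ ≤ (12 * j) * (1 + 2 * A / j) := by gcongr
      _ = 12 * j + 24 * A := by field_simp; ring
      _ ≤ 36 * A := by linarith
  have hnear : ∑ u ∈ U with supAbs (primPart u) ≤ F, (1 : ℝ) / supAbs (primPart u)
      ≤ 36 * A * (1 + Real.log A) := by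
    have hmaps : ∀ u ∈ U.filter (fun u => supAbs (primPart u) ≤ F),
        supAbs (primPart u) ∈ Finset.Icc 1 F := by
      intro u hu
      rw [Finset.mem_filter] at hu
      exact Finset.mem_Icc.2 ⟨one_le_supAbs_primPart (hU0 u hu.1), hu.2⟩
    rw [← Finset.sum_fiberwise_of_maps_to hmaps]
    calc _ ≤ ∑ j ∈ Finset.Icc 1 F, 36 * A * ((j : ℝ)⁻¹) := by
          refine Finset.sum_le_sum fun j hj => ?_
          calc _ = ∑ u ∈ (U.filter (fun u => supAbs (primPart u) ≤ F)).filter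
                  (fun u => supAbs (primPart u) = j), (j : ℝ)⁻¹ := by
                refine Finset.sum_congr rfl fun u hu => ?_
                rw [(Finset.mem_filter.1 hu).2, one_div]
            _ = (((U.filter (fun u => supAbs (primPart u) ≤ F)).filter
                  (fun u => supAbs (primPart u) = j)).card : ℝ) * (j : ℝ)⁻¹ := by
                rw [Finset.sum_const, nsmul_eq_mul]
            _ ≤ _ := by
                gcongr
                refine le_trans ?_ (hlevel j hj)
                exact_mod_cast Finset.card_le_card
                  (Finset.filter_subset_filter _ (Finset.filter_subset _ _))
      _ = 36 * A * ((harmonic F : ℚ) : ℝ) := by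
          rw [← Finset.mul_sum, harmonic_eq_sum_Icc]
          push_cast; rfl
      _ ≤ 36 * A * (1 + Real.log A) := by
          gcongr
          refine (harmonic_le_one_add_log F).trans ?_
          gcongr
  nlinarith

/-- Pairs `(u, v)` with `u ≠ 0` and `u · v = k`, counted by fixing `u`, which confines `v` to a
line. -/
lemma card_orthogonal_pairs_le (A B : ℝ) (hA : 1 ≤ A) (hAB : A ≤ B) (k : ℤ)
    (P : Finset ((ℤ × ℤ) × (ℤ × ℤ))) (hP0 : ∀ p ∈ P, p.1 ≠ 0)
    (hPk : ∀ p ∈ P, p.1.1 * p.2.1 + p.1.2 * p.2.2 = k)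
    (hPA : ∀ p ∈ P, ∀ q ∈ P, ‖p.1 - q.1‖ ≤ A) (hPB : ∀ p ∈ P, ∀ q ∈ P, ‖p.2 - q.2‖ ≤ B) :
    (P.card : ℝ) ≤ 99 * (A * B * (1 + Real.log A)) := by
  classical
  have hA0 : 0 < A := by linarith
  have hB0 : 0 < B := by linarith
  have hlog : 0 ≤ Real.log A := Real.log_nonneg hA
  set U := P.image Prod.fst with hU
  have hU0 : ∀ u ∈ U, u ≠ 0 := by
    intro u hu
    obtain ⟨p, hp, rfl⟩ := Finset.mem_image.1 hu
    exact hP0 p hp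
  have hUA : ∀ u ∈ U, ∀ w ∈ U, ‖u - w‖ ≤ A := by
    intro u hu w hw
    obtain ⟨p, hp, rfl⟩ := Finset.mem_image.1 hu
    obtain ⟨q, hq, rfl⟩ := Finset.mem_image.1 hw
    exact hPA p hp q hq
  have hfib : ∀ u ∈ U, ((P.filter fun p => p.1 = u).card : ℝ)
      ≤ 1 + 2 * B * (1 / supAbs (primPart u)) := by
    intro u hu
    set V := (P.filter fun p => p.1 = u).image Prod.snd with hV
    have hcard : V.card = (P.filter fun p => p.1 = u).card := by
      refine Finset.card_image_of_injOn fun p hp q hq h => ?_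
      simp only [Finset.coe_filter, Set.mem_ofPred_eq] at hp hq
      exact Prod.ext (hp.2.trans hq.2.symm) h
    rw [← hcard, mul_one_div]
    refine card_line_le (hU0 u hu) k B hB0.le V ?_ ?_
    · intro v hv
      obtain ⟨p, hp, rfl⟩ := Finset.mem_image.1 hv
      rw [Finset.mem_filter] at hp
      rw [← hp.2]; exact hPk p hp.1
    · intro v hv w hw
      obtain ⟨p, hp, rfl⟩ := Finset.mem_image.1 hv
      obtain ⟨q, hq, rfl⟩ := Finset.mem_image.1 hw
      exact hPB p (Finset.mem_filter.1 hp).1 q (Finset.mem_filter.1 hq).1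
  have hbox := card_box_le A hA U hUA
  have hsum := sum_inv_primPart_le A hA U hU0 hUA
  calc (P.card : ℝ) = ∑ u ∈ U, ((P.filter fun p => p.1 = u).card : ℝ) := by
        rw [Finset.card_eq_sum_card_image Prod.fst P, Nat.cast_sum]
    _ ≤ ∑ u ∈ U, (1 + 2 * B * ((1 : ℝ) / supAbs (primPart u))) := Finset.sum_le_sum hfib
    _ = U.card + 2 * B * ∑ u ∈ U, (1 : ℝ) / supAbs (primPart u) := by
        rw [Finset.sum_add_distrib, ← Finset.mul_sum]; simp
    _ ≤ 9 * A ^ 2 + 2 * B * (45 * A * (1 + Real.log A)) := by gcongr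
    _ ≤ 9 * (A * B * (1 + Real.log A)) + 2 * B * (45 * A * (1 + Real.log A)) := by
        have h1 : A ^ 2 ≤ A * B := by nlinarith
        have h2 : A * B ≤ A * B * (1 + Real.log A) := by
          have : 0 ≤ A * B * Real.log A := by positivity
          linarith
        linarith
    _ = _ := by ring

/-- Pairs `(u, v)` with `u · v = k`, counted by fixing `u + v`, which confines `u - v` to a circle. Only
`u` and `u + v` are required to lie in sets of bounded diameter. -/
lemma card_circle_pairs_le (θ : ℝ) (hθ : 0 < θ) :
    ∃ C : ℝ, 1 ≤ C ∧ ∀ (A B : ℝ), 1 ≤ A → 1 ≤ B → ∀ (k : ℤ)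
      (P : Finset ((ℤ × ℤ) × (ℤ × ℤ))),
      (∀ p ∈ P, p.1.1 * p.2.1 + p.1.2 * p.2.2 = k) →
      (∀ p ∈ P, ∀ q ∈ P, ‖p.1 - q.1‖ ≤ B) →
      (∀ p ∈ P, ∀ q ∈ P, ‖(p.1 + p.2) - (q.1 + q.2)‖ ≤ A) →
      (P.card : ℝ) ≤ C * (A ^ 2 * B ^ θ) := by
  classical
  obtain ⟨C, hC1, hC⟩ := card_arc_le θ hθ
  have h2θ : (1 : ℝ) ≤ 2 ^ θ := Real.one_le_rpow (by norm_num) hθ.le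
  refine ⟨9 * C * 2 ^ θ, by nlinarith, fun A B hA hB k P hPk hPB hPA => ?_⟩
  set W := P.image (fun p => p.1 + p.2) with hW
  have hWA : ∀ u ∈ W, ∀ w ∈ W, ‖u - w‖ ≤ A := by
    intro u hu w hw
    obtain ⟨p, hp, rfl⟩ := Finset.mem_image.1 hu
    obtain ⟨q, hq, rfl⟩ := Finset.mem_image.1 hw
    exact hPA p hp q hq
  have hfib : ∀ w ∈ W, ((P.filter fun p => p.1 + p.2 = w).card : ℝ) ≤ C * (2 * B) ^ θ := by
    intro w _
    set V := (P.filter fun p => p.1 + p.2 = w).image (fun p => p.1 - p.2) with hV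
    have hcard : V.card = (P.filter fun p => p.1 + p.2 = w).card := by
      refine Finset.card_image_of_injOn fun p hp q hq h => ?_
      simp only [Finset.coe_filter, Set.mem_ofPred_eq] at hp hq
      have h' := hp.2.trans hq.2.symm
      simp only [Prod.ext_iff, Prod.fst_add, Prod.snd_add, Prod.fst_sub, Prod.snd_sub] at h h' ⊢
      omega
    rw [← hcard]
    -- on the fibre `u + v = w` the point `u - v` lies on the circle of radius² `|w|² - 4k`
    refine hC (w.1 ^ 2 + w.2 ^ 2 - 4 * k) (2 * B) (by linarith) V ?_ ?_
    · intro v hv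
      obtain ⟨p, hp, rfl⟩ := Finset.mem_image.1 hv
      rw [Finset.mem_filter] at hp
      rw [← hp.2, ← hPk p hp.1]
      simp only [Prod.fst_add, Prod.snd_add, Prod.fst_sub, Prod.snd_sub]
      ring
    · intro v hv v' hv'
      obtain ⟨p, hp, rfl⟩ := Finset.mem_image.1 hv
      obtain ⟨q, hq, rfl⟩ := Finset.mem_image.1 hv'
      rw [Finset.mem_filter] at hp hq
      have hpq : p.1 - p.2 - (q.1 - q.2) = (p.1 - q.1) + (p.1 - q.1) := by
        have h' := hp.2.trans hq.2.symm
        simp only [Prod.ext_iff, Prod.fst_add, Prod.snd_add, Prod.fst_sub, Prod.snd_sub] at h' ⊢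
        omega
      rw [hpq]
      have := hPB p hp.1 q hq.1
      linarith [norm_add_le (p.1 - q.1) (p.1 - q.1)]
  calc (P.card : ℝ) = ∑ w ∈ W, ((P.filter fun p => p.1 + p.2 = w).card : ℝ) := by
        rw [Finset.card_eq_sum_card_image (fun p => p.1 + p.2) P, Nat.cast_sum]
    _ ≤ ∑ w ∈ W, C * (2 * B) ^ θ := Finset.sum_le_sum hfib
    _ = W.card * (C * (2 * B) ^ θ) := by rw [Finset.sum_const, nsmul_eq_mul]
    _ ≤ (9 * A ^ 2) * (C * (2 * B) ^ θ) := by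
        gcongr
        exact card_box_le A hA W hWA
    _ = _ := by
        rw [Real.mul_rpow (by norm_num) (by linarith)]; ring

/-! ### The Schur test -/

/-- Schur's test for a `0/1` kernel: if each row has at most `R` and each column at most `S` nonzero
entries, the squared `ℓ²` operator norm is at most `R * S`. Row and column counts are phrased through
finite subsets of the support. -/
lemma schur_test {α β : Type*} (K : β → α → ℂ) (hK : ∀ b a, K b a = 0 ∨ K b a = 1) (R S : ℝ)
    (hR : ∀ b, ∀ T : Finset α, (∀ a ∈ T, K b a ≠ 0) → (T.card : ℝ) ≤ R)
    (hS : ∀ a, ∀ T : Finset β, (∀ b ∈ T, K b a ≠ 0) → (T.card : ℝ) ≤ S)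
    (hR0 : 0 ≤ R) (f : α → ℂ) (hf : ∑' a, ‖f a‖ ^ 2 = 1) :
    ∑' b, ENNReal.ofReal (‖∑' a, K b a * f a‖ ^ 2) ≤ ENNReal.ofReal (R * S) := by
  classical
  let ind : β → α → ℝ≥0∞ := fun b a => if K b a ≠ 0 then 1 else 0
  have hrow : ∀ b, ENNReal.ofReal (‖∑' a, K b a * f a‖ ^ 2) ≤
      ENNReal.ofReal R * ∑' a, ind b a * ENNReal.ofReal (‖f a‖ ^ 2) := by
    intro b
    -- a row is finite, so the inner `tsum` is a genuine sum for every `f`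
    have hfin : {a | K b a ≠ 0}.Finite := by
      by_contra hinf
      obtain ⟨n, hn⟩ := exists_nat_gt R
      obtain ⟨t, ht, htn⟩ := Set.Infinite.exists_subset_card_eq hinf n
      have := hR b t fun a ha => ht ha
      rw [htn] at this
      linarith
    set s := hfin.toFinset with hs
    have hsK : ∀ a ∈ s, K b a = 1 := fun a ha =>
      (hK b a).resolve_left ((Set.Finite.mem_toFinset hfin).1 ha)
    have hsum : ∑' a, K b a * f a = ∑ a ∈ s, f a := by
      rw [tsum_eq_sum (s := s)]
      · exact Finset.sum_congr rfl fun a ha => by rw [hsK a ha, one_mul]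
      · intro a ha
        have : K b a = 0 := by
          by_contra h
          exact ha ((Set.Finite.mem_toFinset hfin).2 h)
        rw [this, zero_mul]
    have hcs : ‖∑ a ∈ s, f a‖ ^ 2 ≤ R * ∑ a ∈ s, ‖f a‖ ^ 2 := by
      calc ‖∑ a ∈ s, f a‖ ^ 2 ≤ (∑ a ∈ s, ‖f a‖) ^ 2 := by gcongr; exact norm_sum_le _ _
        _ ≤ (s.card : ℝ) * ∑ a ∈ s, ‖f a‖ ^ 2 := sq_sum_le_card_mul_sum_sq
        _ ≤ _ := by
            gcongr
            exact hR b s fun a ha => (Set.Finite.mem_toFinset hfin).1 ha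
    rw [hsum]
    refine (ENNReal.ofReal_le_ofReal hcs).trans ?_
    rw [ENNReal.ofReal_mul hR0, ENNReal.ofReal_sum_of_nonneg fun _ _ => by positivity]
    gcongr
    calc ∑ a ∈ s, ENNReal.ofReal (‖f a‖ ^ 2)
        = ∑ a ∈ s, ind b a * ENNReal.ofReal (‖f a‖ ^ 2) :=
          Finset.sum_congr rfl fun a ha => by simp [ind, hsK a ha]
      _ ≤ _ := ENNReal.sum_le_tsum s
  have hcol : ∀ a, ∑' b, ind b a ≤ ENNReal.ofReal S := by
    intro a
    rw [ENNReal.tsum_eq_iSup_sum]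
    refine iSup_le fun T => ?_
    have : ∑ b ∈ T, ind b a = ((T.filter fun b => K b a ≠ 0).card : ℝ≥0∞) := by
      simp [ind, Finset.sum_ite]
    rw [this, ← ENNReal.ofReal_natCast]
    exact ENNReal.ofReal_le_ofReal (hS a _ fun b hb => (Finset.mem_filter.1 hb).2)
  -- a family with nonzero `tsum` is summable
  have hfs : Summable fun a => ‖f a‖ ^ 2 := by
    by_contra h
    rw [tsum_eq_zero_of_not_summable h] at hf
    exact zero_ne_one hf
  calc ∑' b, ENNReal.ofReal (‖∑' a, K b a * f a‖ ^ 2)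
      ≤ ∑' b, ENNReal.ofReal R * ∑' a, ind b a * ENNReal.ofReal (‖f a‖ ^ 2) :=
        ENNReal.tsum_le_tsum hrow
    _ = ENNReal.ofReal R * ∑' a, (∑' b, ind b a) * ENNReal.ofReal (‖f a‖ ^ 2) := by
        rw [ENNReal.tsum_mul_left, ENNReal.tsum_comm]
        simp_rw [ENNReal.tsum_mul_right]
    _ ≤ ENNReal.ofReal R * ∑' a, ENNReal.ofReal S * ENNReal.ofReal (‖f a‖ ^ 2) := by
        gcongr with a
        exact hcol a
    _ = ENNReal.ofReal R * (ENNReal.ofReal S * 1) := by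
        rw [ENNReal.tsum_mul_left, ← ENNReal.ofReal_tsum_of_nonneg (fun _ => by positivity) hfs, hf,
          ENNReal.ofReal_one]
    _ = ENNReal.ofReal (R * S) := by rw [mul_one, ENNReal.ofReal_mul hR0]

/-! ### The support of the tensor -/

lemma norm_sub_le_of_jbZ {x y a : ℤ × ℤ} {N : ℝ} (hx : jbZ (x - a) ≤ 2 * N)
    (hy : jbZ (y - a) ≤ 2 * N) : ‖x - y‖ ≤ 4 * N := by
  have key : ∀ z : ℤ × ℤ, ‖z‖ ≤ jbZ z := by
    intro z
    rw [intPair_norm_le_iff]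
    unfold jbZ jbSq
    constructor <;> apply Real.abs_le_sqrt <;> nlinarith [sq_nonneg (z.1 : ℝ), sq_nonneg (z.2 : ℝ)]
  have h : x - y = (x - a) - (y - a) := by abel
  rw [h]
  linarith [norm_sub_le (x - a) (y - a), key (x - a), key (y - a)]

section Support

variable {a₁ a₂ a₃ : ℤ × ℤ} {N₁ N₂ N₃ : ℝ} {m : ℤ} {n n₁ n₂ n₃ : ℤ × ℤ}

lemma hTensorK_eq (a₁ a₂ a₃ : ℤ × ℤ) (N₁ N₂ N₃ : ℝ) (m : ℤ) (n n₁ n₂ n₃ : ℤ × ℤ) :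
    hTensorK a₁ a₂ a₃ N₁ N₂ N₃ m n n₁ n₂ n₃ = 0 ∨
      hTensorK a₁ a₂ a₃ N₁ N₂ N₃ m n n₁ n₂ n₃ = 1 := by
  unfold hTensorK hTensor
  split_ifs <;> simp

/-- The constraints on the support of `h^m`, with the phase in the factorised form
`κ = 2 (n₃ - n₂) · (n₁ - n₂)`. Thus `m` is even on the support and `m / 2` is exact. -/
lemma hTensorK_supp (h : hTensorK a₁ a₂ a₃ N₁ N₂ N₃ m n n₁ n₂ n₃ ≠ 0) :
    n = n₁ - n₂ + n₃ ∧ n₂ ≠ n₁ ∧ n₂ ≠ n₃ ∧ jbZ (n₁ - a₁) ≤ 2 * N₁ ∧ jbZ (n₂ - a₂) ≤ 2 * N₂ ∧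
      jbZ (n₃ - a₃) ≤ 2 * N₃ ∧ (n₃.1 - n₂.1) * (n₁.1 - n₂.1) + (n₃.2 - n₂.2) * (n₁.2 - n₂.2) =
        m / 2 := by
  unfold hTensorK hTensor at h
  split_ifs at h with hκ hh
  · obtain ⟨hn, h1, h2, -, h3, -, h4, -, h5⟩ := hh
    refine ⟨hn, h1, h2, h3, h4, h5, ?_⟩
    have : m = 2 * ((n₃.1 - n₂.1) * (n₁.1 - n₂.1) + (n₃.2 - n₂.2) * (n₁.2 - n₂.2)) := by
      rw [← hκ, hn]
      simp only [kappa, jbSqInt, Prod.fst_add, Prod.snd_add, Prod.fst_sub, Prod.snd_sub]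
      ring
    omega
  · exact absurd rfl h
  · exact absurd rfl h

end Support

/-! ### The two operator norms -/

lemma one_add_log_le (θ : ℝ) (hθ : 0 < θ) {x y : ℝ} (hx : 1 ≤ x) (hxy : x ≤ y) :
    1 + Real.log (4 * x) ≤ (1 + 4 ^ θ / θ) * y ^ θ := by
  have h1 : Real.log (4 * x) ≤ (4 * x) ^ θ / θ := Real.log_le_rpow_div (by linarith) hθ
  have h2 : (4 * x) ^ θ ≤ 4 ^ θ * y ^ θ := by
    rw [← Real.mul_rpow (by norm_num) (by linarith)]
    gcongr
  have h3 : (1 : ℝ) ≤ y ^ θ := Real.one_le_rpow (hx.trans hxy) hθ.le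
  have h4 : (4 * x) ^ θ / θ ≤ 4 ^ θ * y ^ θ / θ := by gcongr
  calc 1 + Real.log (4 * x) ≤ y ^ θ + 4 ^ θ * y ^ θ / θ := by linarith
    _ = _ := by ring

/-- The column count for `n → n₁n₂n₃`: the number of triples `(n₁, n₂, n₃)` in the support of `h^m`
for a given `n`. The triple is encoded by the pair `(n - n₁, n - n₃)`, whose scalar product is
`m / 2` and whose sum is `n - n₂`; the smallest of `N₁`, `N₂`, `N₃` decides how these pairs are
counted. -/
lemma card_fixed_output_le (θ : ℝ) (hθ : 0 < θ) :
    ∃ C : ℝ, 1 ≤ C ∧ ∀ (a₁ a₂ a₃ : ℤ × ℤ) (N₁ N₂ N₃ : ℝ), 1 ≤ N₁ → 1 ≤ N₂ → 1 ≤ N₃ →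
      ∀ (m : ℤ) (n : ℤ × ℤ) (T : Finset ((ℤ × ℤ) × (ℤ × ℤ) × (ℤ × ℤ))),
      (∀ t ∈ T, hTensorK a₁ a₂ a₃ N₁ N₂ N₃ m n t.1 t.2.1 t.2.2 ≠ 0) →
      (T.card : ℝ) ≤
        C * (max N₁ (max N₂ N₃) ^ (1 + θ) * min N₁ (min N₂ N₃)) := by
  classical
  obtain ⟨C, hC1, hC⟩ := card_circle_pairs_le θ hθ
  set C₁ : ℝ := 99 * 16 * (1 + 4 ^ θ / θ) with hC₁
  set C₂ : ℝ := C * 16 * 4 ^ θ with hC₂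
  have h4θ : (1 : ℝ) ≤ 4 ^ θ := Real.one_le_rpow (by norm_num) hθ.le
  have hC₂1 : 1 ≤ C₂ := by rw [hC₂]; nlinarith
  refine ⟨max C₁ C₂, le_max_of_le_right hC₂1, ?_⟩
  intro a₁ a₂ a₃ N₁ N₂ N₃ hN₁ hN₂ hN₃ m n T hT
  set L := max N₁ (max N₂ N₃) with hL
  have hL₁ : N₁ ≤ L := le_max_left _ _
  have hL₂ : N₂ ≤ L := le_max_of_le_right (le_max_left _ _)
  have hL₃ : N₃ ≤ L := le_max_of_le_right (le_max_right _ _)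
  have hL0 : 0 < L := by linarith
  have hLpow : L ^ (1 + θ) = L * L ^ θ := by rw [Real.rpow_add hL0, Real.rpow_one]
  set P := T.image (fun t => (n - t.1, n - t.2.2)) with hP
  have hcard : P.card = T.card := by
    refine Finset.card_image_of_injOn fun p hp q hq h => ?_
    have e1 := (hTensorK_supp (hT p hp)).1
    have e2 := (hTensorK_supp (hT q hq)).1
    simp only [Prod.mk.injEq, sub_right_inj] at h
    refine Prod.ext h.1 (Prod.ext ?_ h.2)
    rw [h.1, h.2] at e1
    have := e1.symm.trans e2
    simpa using this
  have hP' : ∀ p ∈ P, ∃ t ∈ T, (n - t.1, n - t.2.2) = p := fun p hp => Finset.mem_image.1 hp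
  have hPk : ∀ p ∈ P, p.1.1 * p.2.1 + p.1.2 * p.2.2 = m / 2 := by
    intro p hp
    obtain ⟨t, ht, rfl⟩ := hP' p hp
    obtain ⟨hn, -, -, -, -, -, hk⟩ := hTensorK_supp (hT t ht)
    rw [← hk, hn]
    simp only [Prod.fst_add, Prod.snd_add, Prod.fst_sub, Prod.snd_sub]
    ring
  have hP0 : ∀ p ∈ P, p.1 ≠ 0 ∧ p.2 ≠ 0 := by
    intro p hp
    obtain ⟨t, ht, rfl⟩ := hP' p hp
    obtain ⟨hn, h1, h2, -⟩ := hTensorK_supp (hT t ht)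
    have e1 : n - t.1 = t.2.2 - t.2.1 := by rw [hn]; abel
    have e2 : n - t.2.2 = t.1 - t.2.1 := by rw [hn]; abel
    exact ⟨by rw [e1]; exact sub_ne_zero.2 h2.symm, by rw [e2]; exact sub_ne_zero.2 h1.symm⟩
  have hP₁ : ∀ p ∈ P, ∀ q ∈ P, ‖p.1 - q.1‖ ≤ 4 * N₁ := by
    intro p hp q hq
    obtain ⟨t, ht, rfl⟩ := hP' p hp
    obtain ⟨s, hs, rfl⟩ := hP' q hq
    obtain ⟨-, -, -, h1, -⟩ := hTensorK_supp (hT t ht)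
    obtain ⟨-, -, -, h2, -⟩ := hTensorK_supp (hT s hs)
    rw [sub_sub_sub_cancel_left]
    exact norm_sub_le_of_jbZ h2 h1
  have hP₃ : ∀ p ∈ P, ∀ q ∈ P, ‖p.2 - q.2‖ ≤ 4 * N₃ := by
    intro p hp q hq
    obtain ⟨t, ht, rfl⟩ := hP' p hp
    obtain ⟨s, hs, rfl⟩ := hP' q hq
    obtain ⟨-, -, -, -, -, h1, -⟩ := hTensorK_supp (hT t ht)
    obtain ⟨-, -, -, -, -, h2, -⟩ := hTensorK_supp (hT s hs)
    rw [sub_sub_sub_cancel_left]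
    exact norm_sub_le_of_jbZ h2 h1
  have hP₂ : ∀ p ∈ P, ∀ q ∈ P, ‖(p.1 + p.2) - (q.1 + q.2)‖ ≤ 4 * N₂ := by
    intro p hp q hq
    obtain ⟨t, ht, rfl⟩ := hP' p hp
    obtain ⟨s, hs, rfl⟩ := hP' q hq
    obtain ⟨e1, -, -, -, h1, -⟩ := hTensorK_supp (hT t ht)
    obtain ⟨e2, -, -, -, h2, -⟩ := hTensorK_supp (hT s hs)
    have f1 : n - t.1 + (n - t.2.2) = n - t.2.1 := by
      rw [show t.1 = n + t.2.1 - t.2.2 by rw [e1]; abel]; abel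
    have f2 : n - s.1 + (n - s.2.2) = n - s.2.1 := by
      rw [show s.1 = n + s.2.1 - s.2.2 by rw [e2]; abel]; abel
    simp only [f1, f2]
    rw [sub_sub_sub_cancel_left]
    exact norm_sub_le_of_jbZ h2 h1
  -- the two thin cases, where the smallest ball is that of `n₁` or of `n₃`
  have thin : ∀ N : ℝ, 1 ≤ N → N ≤ L →
      (P.card : ℝ) ≤ 99 * ((4 * N) * (4 * L) * (1 + Real.log (4 * N))) →
      (T.card : ℝ) ≤ max C₁ C₂ * (L ^ (1 + θ) * N) := by
    intro N hN hNL h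
    rw [hcard] at h
    calc (T.card : ℝ) ≤ _ := h
      _ ≤ 99 * ((4 * N) * (4 * L) * ((1 + 4 ^ θ / θ) * L ^ θ)) := by
          gcongr
          exact one_add_log_le θ hθ hN hNL
      _ = C₁ * (L ^ (1 + θ) * N) := by rw [hLpow, hC₁]; ring
      _ ≤ _ := by gcongr; exact le_max_left _ _
  rcases min_choice N₁ (min N₂ N₃) with h | h
  · rw [h]
    exact thin N₁ hN₁ hL₁ (card_orthogonal_pairs_le (4 * N₁) (4 * L) (by linarith) (by linarith)
      (m / 2) P (fun p hp => (hP0 p hp).1) hPk hP₁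
      fun p hp q hq => (hP₃ p hp q hq).trans (by linarith))
  rw [h]
  rcases min_choice N₂ N₃ with h | h
  · rw [h]
    -- `N₂` is smallest: the spare factor `N₂` is bounded by `L`
    have := hC (4 * N₂) (4 * N₁) (by linarith) (by linarith) (m / 2) P hPk hP₁ hP₂
    rw [hcard] at this
    calc (T.card : ℝ) ≤ C * ((4 * N₂) ^ 2 * (4 * N₁) ^ θ) := this
      _ ≤ C * ((4 * N₂) ^ 2 * (4 * L) ^ θ) := by gcongr
      _ = C₂ * ((N₂ * L ^ θ) * N₂) := by
          rw [Real.mul_rpow (by norm_num) hL0.le, hC₂]; ring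
      _ ≤ C₂ * ((L * L ^ θ) * N₂) := by gcongr
      _ = C₂ * (L ^ (1 + θ) * N₂) := by rw [hLpow]
      _ ≤ _ := by gcongr; exact le_max_right _ _
  · rw [h]
    -- exchanging the roles of `n₁` and `n₃`
    refine thin N₃ hN₃ hL₃ ?_
    have hsw : (P.image Prod.swap).card = P.card :=
      Finset.card_image_of_injective _ Prod.swap_injective
    rw [← hsw]
    have hQ : ∀ p ∈ P.image Prod.swap, p.swap ∈ P := by
      intro p hp
      obtain ⟨q, hq, rfl⟩ := Finset.mem_image.1 hp
      simpa using hq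
    refine card_orthogonal_pairs_le (4 * N₃) (4 * L) (by linarith) (by linarith)
      (m / 2) _ (fun p hp => (hP0 _ (hQ p hp)).2) ?_ (fun p hp q hq => hP₃ _ (hQ p hp) _ (hQ q hq))
      fun p hp q hq => (hP₁ _ (hQ p hp) _ (hQ q hq)).trans (by linarith)
    intro p hp
    rw [← hPk _ (hQ p hp)]
    simp only [Prod.fst_swap, Prod.snd_swap]
    ring

lemma card_line_le_nine {u : ℤ × ℤ} (hu : u ≠ 0) (k : ℤ) (N : ℝ) (hN : 1 ≤ N)
    (T : Finset (ℤ × ℤ)) (hT : ∀ v ∈ T, u.1 * v.1 + u.2 * v.2 = k)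
    (hD : ∀ v ∈ T, ∀ w ∈ T, ‖v - w‖ ≤ 4 * N) : (T.card : ℝ) ≤ 9 * N := by
  have h := card_line_le hu k (4 * N) (by linarith) T hT hD
  have h1 : (1 : ℝ) ≤ supAbs (primPart u) := by exact_mod_cast one_le_supAbs_primPart hu
  have h2 : 2 * (4 * N) / supAbs (primPart u) ≤ 2 * (4 * N) := div_le_self (by linarith) h1
  linarith

/-- The row count for `nn₁ → n₂n₃`: given `n₂` and `n₃`, the point `n₁` lies on a line perpendicular
to `n₃ - n₂`, and it determines `n`. -/
lemma card_row_le {a₁ a₂ a₃ : ℤ × ℤ} {N₁ N₂ N₃ : ℝ} (hN₁ : 1 ≤ N₁) (m : ℤ) (n₂ n₃ : ℤ × ℤ)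
    (T : Finset ((ℤ × ℤ) × (ℤ × ℤ)))
    (hT : ∀ t ∈ T, hTensorK a₁ a₂ a₃ N₁ N₂ N₃ m t.1 t.2 n₂ n₃ ≠ 0) :
    (T.card : ℝ) ≤ 9 * N₁ := by
  classical
  rcases T.eq_empty_or_nonempty with rfl | ⟨t₀, ht₀⟩
  · simp only [Finset.card_empty, Nat.cast_zero]; linarith
  have hu : n₃ - n₂ ≠ 0 := sub_ne_zero.2 (hTensorK_supp (hT t₀ ht₀)).2.2.1.symm
  have hcard : (T.image Prod.snd).card = T.card := by
    refine Finset.card_image_of_injOn fun p hp q hq h => ?_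
    have e1 := (hTensorK_supp (hT p hp)).1
    have e2 := (hTensorK_supp (hT q hq)).1
    exact Prod.ext (by rw [e1, e2, h]) h
  rw [← hcard]
  refine card_line_le_nine hu (m / 2 + (n₃ - n₂).1 * n₂.1 + (n₃ - n₂).2 * n₂.2) N₁ hN₁ _ ?_ ?_
  · intro v hv
    obtain ⟨t, ht, rfl⟩ := Finset.mem_image.1 hv
    have hk := (hTensorK_supp (hT t ht)).2.2.2.2.2.2
    simp only [Prod.fst_sub, Prod.snd_sub]
    linear_combination hk
  · intro v hv w hw
    obtain ⟨t, ht, rfl⟩ := Finset.mem_image.1 hv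
    obtain ⟨s, hs, rfl⟩ := Finset.mem_image.1 hw
    exact norm_sub_le_of_jbZ (hTensorK_supp (hT t ht)).2.2.2.1 (hTensorK_supp (hT s hs)).2.2.2.1

/-- The column count for `nn₁ → n₂n₃`: given `n` and `n₁`, each of `n₂` and `n₃` lies on a line
perpendicular to `n - n₁` and determines the other, so that the better of the two bounds applies. -/
lemma card_column_le {a₁ a₂ a₃ : ℤ × ℤ} {N₁ N₂ N₃ : ℝ} (hN₂ : 1 ≤ N₂) (hN₃ : 1 ≤ N₃) (m : ℤ)
    (n n₁ : ℤ × ℤ) (T : Finset ((ℤ × ℤ) × (ℤ × ℤ)))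
    (hT : ∀ t ∈ T, hTensorK a₁ a₂ a₃ N₁ N₂ N₃ m n n₁ t.1 t.2 ≠ 0) :
    (T.card : ℝ) ≤ 9 * min N₂ N₃ := by
  classical
  rcases T.eq_empty_or_nonempty with rfl | ⟨t₀, ht₀⟩
  · simp only [Finset.card_empty, Nat.cast_zero]; positivity
  have hdiff : ∀ t ∈ T, t.2 = n - n₁ + t.1 := by
    intro t ht
    rw [(hTensorK_supp (hT t ht)).1]; abel
  have hu : n - n₁ ≠ 0 := by
    intro h
    have := hdiff t₀ ht₀
    rw [h, zero_add] at this
    exact (hTensorK_supp (hT t₀ ht₀)).2.2.1 this.symm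
  have hk : ∀ t ∈ T, (n - n₁).1 * t.1.1 + (n - n₁).2 * t.1.2 =
      (n - n₁).1 * n₁.1 + (n - n₁).2 * n₁.2 - m / 2 := by
    intro t ht
    rw [← (hTensorK_supp (hT t ht)).2.2.2.2.2.2, hdiff t ht]
    simp only [Prod.fst_sub, Prod.snd_sub, Prod.fst_add, Prod.snd_add]
    ring
  rcases min_choice N₂ N₃ with h | h
  · have hcard : (T.image Prod.fst).card = T.card := by
      refine Finset.card_image_of_injOn fun p hp q hq h => ?_
      exact Prod.ext h (by rw [hdiff p hp, hdiff q hq, h])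
    rw [← hcard, h]
    refine card_line_le_nine hu ((n - n₁).1 * n₁.1 + (n - n₁).2 * n₁.2 - m / 2) N₂ hN₂ _ ?_ ?_
    · intro v hv
      obtain ⟨t, ht, rfl⟩ := Finset.mem_image.1 hv
      exact hk t ht
    · intro v hv w hw
      obtain ⟨t, ht, rfl⟩ := Finset.mem_image.1 hv
      obtain ⟨s, hs, rfl⟩ := Finset.mem_image.1 hw
      exact norm_sub_le_of_jbZ (hTensorK_supp (hT t ht)).2.2.2.2.1
        (hTensorK_supp (hT s hs)).2.2.2.2.1
  · have hcard : (T.image Prod.snd).card = T.card := by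
      refine Finset.card_image_of_injOn fun p hp q hq h => ?_
      have e1 := hdiff p hp
      have e2 := hdiff q hq
      rw [h, e2] at e1
      exact Prod.ext (add_left_cancel e1).symm h
    rw [← hcard, h]
    refine card_line_le_nine hu ((n - n₁).1 * n.1 + (n - n₁).2 * n.2 - m / 2) N₃ hN₃ _ ?_ ?_
    · intro v hv
      obtain ⟨t, ht, rfl⟩ := Finset.mem_image.1 hv
      have := hk t ht
      rw [hdiff t ht]
      simp only [Prod.fst_sub, Prod.snd_sub, Prod.fst_add, Prod.snd_add] at this ⊢
      linear_combination this
    · intro v hv w hw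
      obtain ⟨t, ht, rfl⟩ := Finset.mem_image.1 hv
      obtain ⟨s, hs, rfl⟩ := Finset.mem_image.1 hw
      exact norm_sub_le_of_jbZ (hTensorK_supp (hT t ht)).2.2.2.2.2.1
        (hTensorK_supp (hT s hs)).2.2.2.2.2.1

/-- Lemma 4.3 (ii): at each fixed value `m` of the phase `κ`,
`‖h^m‖₂ ≲_θ N_max^{1/2+θ} N_min^{1/2}`, uniformly in the centers, the sizes, and `m`. -/
theorem tensor_bound_II_ii (θ : ℝ) (hθ : 0 < θ) :
    ∃ C > (0 : ℝ), ∀ (a₁ a₂ a₃ : ℤ × ℤ) (N₁ N₂ N₃ : ℝ),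
      1 ≤ N₁ → 1 ≤ N₂ → 1 ≤ N₃ → ∀ m : ℤ,
      tNorm2 (hTensorK a₁ a₂ a₃ N₁ N₂ N₃ m)
        ≤ ENNReal.ofReal
            (C * max N₁ (max N₂ N₃) ^ ((1 : ℝ) / 2 + θ) *
              min N₁ (min N₂ N₃) ^ ((1 : ℝ) / 2)) := by
  -- exponent `2 * θ`, because the operator norm is the square root of the count
  obtain ⟨C, hC1, hC⟩ := card_fixed_output_le (2 * θ) (by positivity)
  set C' := max C 81 with hC'
  have hC'0 : 0 < C' := by positivity
  refine ⟨C' ^ ((1 : ℝ) / 2), by positivity, ?_⟩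
  intro a₁ a₂ a₃ N₁ N₂ N₃ hN₁ hN₂ hN₃ m
  have hcount := hC a₁ a₂ a₃ N₁ N₂ N₃ hN₁ hN₂ hN₃ m
  set L := max N₁ (max N₂ N₃) with hL
  set M := min N₁ (min N₂ N₃) with hM
  have hL1 : 1 ≤ L := le_max_of_le_left hN₁
  have hM1 : 1 ≤ M := le_min hN₁ (le_min hN₂ hN₃)
  have hL0 : 0 < L := by linarith
  have hM0 : 0 < M := by linarith
  set X : ℝ := C' * (L ^ (1 + 2 * θ) * M) with hX
  have hX0 : 0 ≤ X := by positivity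
  have hroot : ENNReal.ofReal X ^ ((1 : ℝ) / 2) = ENNReal.ofReal
      (C' ^ ((1 : ℝ) / 2) * L ^ ((1 : ℝ) / 2 + θ) * M ^ ((1 : ℝ) / 2)) := by
    rw [ENNReal.ofReal_rpow_of_nonneg hX0 (by norm_num), hX,
      Real.mul_rpow hC'0.le (by positivity), Real.mul_rpow (by positivity) hM0.le,
      ← Real.rpow_mul hL0.le, mul_assoc]
    congr 4
    ring
  rw [← hroot]
  refine max_le ?_ ?_
  · -- rows have at most one entry, since `n` is a function of `n₁, n₂, n₃`
    unfold opNorm_n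
    refine ENNReal.rpow_le_rpow (iSup₂_le fun f hf => ?_) (by norm_num)
    refine (schur_test (fun (t : (ℤ × ℤ) × (ℤ × ℤ) × (ℤ × ℤ)) n =>
      hTensorK a₁ a₂ a₃ N₁ N₂ N₃ m n t.1 t.2.1 t.2.2) (fun t n => hTensorK_eq _ _ _ _ _ _ _ _ _ _ _)
      1 (C * (L ^ (1 + 2 * θ) * M)) ?_ ?_ zero_le_one f hf).trans ?_
    · intro t T hT
      have : T.card ≤ 1 := Finset.card_le_one.2 fun a ha b hb =>
        (hTensorK_supp (hT a ha)).1.trans (hTensorK_supp (hT b hb)).1.symm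
      exact_mod_cast this
    · exact fun n T hT => hcount n T hT
    · rw [one_mul]
      refine ENNReal.ofReal_le_ofReal ?_
      rw [hX]
      gcongr
      exact le_max_left _ _
  · unfold opNorm_nn1
    refine ENNReal.rpow_le_rpow (iSup₂_le fun f hf => ?_) (by norm_num)
    refine (schur_test (fun (t q : (ℤ × ℤ) × (ℤ × ℤ)) =>
      hTensorK a₁ a₂ a₃ N₁ N₂ N₃ m q.1 q.2 t.1 t.2) (fun t q => hTensorK_eq _ _ _ _ _ _ _ _ _ _ _)
      (9 * N₁) (9 * min N₂ N₃) (fun t T hT => card_row_le hN₁ m t.1 t.2 T hT)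
      (fun q T hT => card_column_le hN₂ hN₃ m q.1 q.2 T hT) (by linarith) f hf).trans ?_
    refine ENNReal.ofReal_le_ofReal ?_
    -- one of the factors is `M`, the other is at most `L`
    have hprod : N₁ * min N₂ N₃ ≤ L * M := by
      rcases le_total N₁ (min N₂ N₃) with h | h
      · have : min N₂ N₃ ≤ L := (min_le_left _ _).trans (le_max_of_le_right (le_max_left _ _))
        rw [hM, min_eq_left h, mul_comm]
        gcongr
      · rw [hM, min_eq_right h]
        gcongr
        exact le_max_left _ _
    have hLL : L ≤ L ^ (1 + 2 * θ) := by
      calc L = L ^ (1 : ℝ) := (Real.rpow_one L).symm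
        _ ≤ _ := Real.rpow_le_rpow_of_exponent_le hL1 (by linarith)
    calc 9 * N₁ * (9 * min N₂ N₃) = 81 * (N₁ * min N₂ N₃) := by ring
      _ ≤ 81 * (L * M) := by gcongr
      _ ≤ C' * (L ^ (1 + 2 * θ) * M) := by gcongr; exact le_max_right _ _
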